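/- Let α, β, γ ∈ ℂ with α+β ∉ ℤ and γ ∉ ℤ. Then there exists ε > 0 such that for all x, y, z ∈ ℂ with |x| < ε, |y| < ε, |z| < ε, the triple series ∑_{j,k,m ≥ 0} (α)_j (β)_k (1−γ)_m (γ)_{j+k−m} / (j! · k! · m! · (α+β)_{j+k−m}) · x^j y^k z^m converges absolutely and equals (1−z)^{α+β−1} · (1−xz)^{γ−α} · (1−x)^{−γ} · (1−yz)^{−β} · ₂F₁[β, γ; α+β; (y−x)(1−z)/((1−x)(1−yz))]. -/

import Mathlib

open Finset

/-- Pochhammer symbol `(a)_k` for complex `a` and integer `k`. -/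
noncomputable def cpoch (a : ℂ) (k : ℤ) : ℂ :=
  if 0 ≤ k then ∏ i ∈ Finset.range k.toNat, (a + (i : ℂ))
  else (∏ i ∈ Finset.range (-k).toNat, (a + (k : ℂ) + (i : ℂ)))⁻¹

/-- Gauss hypergeometric series `₂F₁[a, b; c; w]`. -/
noncomputable def F21 (a b c w : ℂ) : ℂ :=
  ∑' ℓ : ℕ, cpoch a ℓ * cpoch b ℓ / ((ℓ.factorial : ℂ) * cpoch c ℓ) * w ^ ℓ

/-- General term of the Gelfand–Graev–Retakh triple series. -/
noncomputable def ggrTerm (α β γ x y z : ℂ) : ℕ × ℕ × ℕ → ℂ := fun p =>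
  cpoch α p.1 * cpoch β p.2.1 * cpoch (1 - γ) p.2.2 *
      cpoch γ ((p.1 : ℤ) + (p.2.1 : ℤ) - (p.2.2 : ℤ)) /
    ((p.1.factorial : ℂ) * (p.2.1.factorial : ℂ) * (p.2.2.factorial : ℂ) *
      cpoch (α + β) ((p.1 : ℤ) + (p.2.1 : ℤ) - (p.2.2 : ℤ))) *
    x ^ p.1 * y ^ p.2.1 * z ^ p.2.2

/-! Put `c = α + β`, and let `E` be a linear functional with `E (tⁿ) = (γ)ₙ / (c)ₙ`; when the
integral converges, `E f = Γ(c) / (Γ(γ) Γ(c - γ)) ∫₀¹ f(t) t^(γ - 1) (1 - t)^(c - γ - 1) dt` is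
such an `E`. For arbitrary complex parameters it still exists as a continuous functional on a
Banach algebra, because the moments grow at most geometrically: let `t` be a multiple of the first
character of the circle and prescribe the Fourier coefficients. Interchanging sums then amounts to
continuity of `E`.

By Vandermonde's identity, summing over `m` replaces `tʲ⁺ᵏ` by `(1 - z)^(c - 1) uʲ⁺ᵏ`, where
`u = (1 - z) t + z`, so the triple series is `(1 - z)^(c - 1) E ((1 - x u)^(-α) (1 - y u)^(-β))`.
Here `1 - x u = (1 - x z) (1 - a t)` with `a = x (1 - z) / (1 - x z)`, and similarly
`1 - y u = (1 - y z) (1 - b t)`. Since `α + β = c`, expanding `(1 - b t)^(-β)` in powers of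
`(b - a) t / (1 - a t)` leaves the moments `E (tᵏ (1 - a t)^(-(c + k)))`, which are multiples of
`(1 - a)^(-(γ + k))`; this gives the Gauss series in `(b - a) / (1 - a)`. -/

open Ring (multichoose)

section Multichoose

variable {R : Type*} [CommRing R] [BinomialRing R]

theorem multichoose_eq_neg_one_pow_mul_choose_neg (a : R) (n : ℕ) :
    multichoose a n = (-1) ^ n * Ring.choose (-a) n := by
  rw [Ring.choose_neg', Int.negOnePow_def]
  simp [Units.smul_def, ← mul_assoc, ← mul_pow]

theorem multichoose_neg_natCast (m n : ℕ) :
    multichoose (-m : R) n = (-1) ^ n * m.choose n := by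
  rw [multichoose_eq_neg_one_pow_mul_choose_neg, neg_neg, Ring.choose_natCast]

theorem multichoose_one_sub_sub_natCast (a : R) (n : ℕ) :
    multichoose (1 - a - n) n = (-1) ^ n * multichoose a n := by
  rw [Ring.multichoose_eq, multichoose_eq_neg_one_pow_mul_choose_neg a, ← mul_assoc, ← mul_pow,
    neg_one_mul, neg_neg, one_pow, one_mul]
  congr 1
  ring

theorem multichoose_add_left (a b : R) (n : ℕ) :
    multichoose (a + b) n = ∑ p ∈ antidiagonal n, multichoose a p.1 * multichoose b p.2 := by
  rw [multichoose_eq_neg_one_pow_mul_choose_neg, neg_add, Ring.add_choose_eq n (Commute.all _ _),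
    mul_sum]
  refine sum_congr rfl fun p hp => ?_
  rw [multichoose_eq_neg_one_pow_mul_choose_neg a, multichoose_eq_neg_one_pow_mul_choose_neg b,
    ← mem_antidiagonal.1 hp, pow_add]
  ring

theorem choose_mul_multichoose_add_right (a : R) (p i : ℕ) :
    ((p + i).choose p : R) * multichoose a (p + i) = multichoose a p * multichoose (a + p) i := by
  have h := Ring.choose_smul_choose (a + (p + i : ℕ) - 1) (Nat.le_add_left i p)
  rw [← Ring.multichoose_eq, Nat.choose_symm_add.symm, nsmul_eq_mul, Nat.add_sub_cancel] at h
  rw [h, Ring.multichoose_eq a, Ring.multichoose_eq (a + p), mul_comm]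
  push_cast
  congr 2 <;> ring

theorem multichoose_one_sub_mul_multichoose (c : R) (N m : ℕ) :
    multichoose (1 - c) m * multichoose c N =
      multichoose (1 - c - N) m * multichoose (c - m) N := by
  have h₁ : multichoose (c - m) m = (-1) ^ m * multichoose (1 - c) m := by
    rw [← multichoose_one_sub_sub_natCast, sub_sub_cancel]
  have h₂ : multichoose (c - m + N) m = (-1) ^ m * multichoose (1 - c - N) m := by
    rw [← multichoose_one_sub_sub_natCast]
    congr 1
    ring
  have h₃ := choose_mul_multichoose_add_right (c - m) m N
  rw [add_comm m N, Nat.choose_symm_add.symm, choose_mul_multichoose_add_right, h₂, h₁,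
    sub_add_cancel] at h₃
  have h₄ : ((-1 : R) ^ m) * (-1) ^ m = 1 := pow_mul_pow_eq_one _ (by norm_num)
  linear_combination (-1) ^ m * -h₃ + (multichoose (1 - c - N) m * multichoose (c - m) N
    - multichoose (1 - c) m * multichoose c N) * h₄

theorem succ_mul_multichoose_succ (a : R) (n : ℕ) :
    (n + 1) * multichoose a (n + 1) = (a + n) * multichoose a n := by
  have h := choose_mul_multichoose_add_right a n 1
  rw [Nat.choose_succ_self_right, Ring.multichoose_one_right] at h
  push_cast at h
  rw [h, mul_comm]

end Multichoose

section Pochhammer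

theorem cpoch_natCast_eq_prod (a : ℂ) (n : ℕ) : cpoch a n = ∏ i ∈ range n, (a + i) := by
  simp [cpoch]

theorem cpoch_natCast (a : ℂ) (n : ℕ) : cpoch a n = n.factorial * multichoose a n := by
  rw [cpoch_natCast_eq_prod]
  induction n with
  | zero => simp
  | succ n ih =>
    rw [prod_range_succ, ih, Nat.factorial_succ]
    push_cast
    linear_combination -(n.factorial : ℂ) * succ_mul_multichoose_succ a n

theorem cpoch_neg_natCast (a : ℂ) (n : ℕ) : cpoch a (-n) = (cpoch (a - n) n)⁻¹ := by
  rcases n.eq_zero_or_pos with rfl | hn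
  · simp [cpoch]
  · simp [cpoch, hn.ne', sub_eq_add_neg]

theorem cpoch_natCast_add_natCast (a : ℂ) (m n : ℕ) :
    cpoch a (m + n : ℕ) = cpoch a m * cpoch (a + m) n := by
  rw [cpoch_natCast_eq_prod, cpoch_natCast_eq_prod, cpoch_natCast_eq_prod, prod_range_add]
  simp only [Nat.cast_add, add_assoc]

theorem cpoch_natCast_ne_zero {a : ℂ} {n : ℕ} (ha : ∀ k < n, a + k ≠ 0) : cpoch a n ≠ 0 := by
  rw [cpoch_natCast_eq_prod, prod_ne_zero_iff]
  exact fun k hk => ha k (mem_range.1 hk)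

theorem multichoose_sub_natCast_ne_zero {c : ℂ} (hc : ∀ n : ℤ, c ≠ n) (m n : ℕ) :
    multichoose (c - m) n ≠ 0 := by
  have h : cpoch (c - m) n ≠ 0 := cpoch_natCast_ne_zero fun k _ hk =>
    hc (m - k) (by push_cast; linear_combination hk)
  rw [cpoch_natCast] at h
  exact right_ne_zero_of_mul h

theorem multichoose_ne_zero {c : ℂ} (hc : ∀ n : ℤ, c ≠ n) (n : ℕ) : multichoose c n ≠ 0 := by
  simpa using multichoose_sub_natCast_ne_zero hc 0 n

theorem multichoose_add_natCast_div {c : ℂ} (hc : ∀ n : ℤ, c ≠ n) (l i : ℕ) :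
    multichoose (c + l) i / multichoose c (l + i) = (l + i).choose l / multichoose c l := by
  rw [div_eq_div_iff (multichoose_ne_zero hc _) (multichoose_ne_zero hc _),
    choose_mul_multichoose_add_right, mul_comm]

theorem multichoose_one_sub_mul_div_eq_sum {c : ℂ} (hc : ∀ n : ℤ, c ≠ n) (γ : ℂ) (m N : ℕ) :
    multichoose (1 - c) m * (multichoose (γ - m) N / multichoose (c - m) N) =
      ∑ p ∈ antidiagonal N, multichoose γ p.1 * (-1) ^ p.2 / multichoose c N *
        (m.choose p.2 * multichoose (1 - c - N) m) := by
  have hswap : multichoose (1 - c) m / multichoose (c - m) N =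
      multichoose (1 - c - N) m / multichoose c N := by
    rw [div_eq_div_iff (multichoose_sub_natCast_ne_zero hc m N) (multichoose_ne_zero hc N)]
    exact multichoose_one_sub_mul_multichoose c N m
  rw [mul_div_left_comm, hswap, sub_eq_add_neg γ, multichoose_add_left, sum_mul]
  refine sum_congr rfl fun p _ => ?_
  rw [multichoose_neg_natCast]
  ring

theorem cpoch_sub_natCast_mul_cpoch {a : ℂ} (ha : ∀ n : ℕ, a ≠ n + 1) (m N : ℕ) :
    cpoch (a - m) m * cpoch a (N - m) = cpoch (a - m) N := by
  rcases le_or_gt m N with h | h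
  · obtain ⟨d, rfl⟩ := Nat.exists_eq_add_of_le h
    have hindex : ((m + d : ℕ) : ℤ) - m = d := by push_cast; ring
    rw [cpoch_natCast_add_natCast, sub_add_cancel, hindex]
  · obtain ⟨d, rfl⟩ := Nat.exists_eq_add_of_le h.le
    have hne : cpoch (a - d) d ≠ 0 := by
      refine cpoch_natCast_ne_zero fun k hk h0 => ha (d - k - 1) ?_
      rw [Nat.cast_sub (by omega), Nat.cast_sub hk.le]
      linear_combination h0
    have hindex : (N : ℤ) - (N + d : ℕ) = -d := by push_cast; ring
    have hshift : a - (N + d : ℕ) + N = a - d := by push_cast; ring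
    rw [cpoch_natCast_add_natCast, hshift, hindex, cpoch_neg_natCast, mul_assoc,
      mul_inv_cancel₀ hne, mul_one]

theorem cpoch_one_sub_mul_cpoch {a : ℂ} (ha : ∀ n : ℕ, a ≠ n + 1) (m N : ℕ) :
    cpoch (1 - a) m * cpoch a (N - m) =
      (-1) ^ m * (N.factorial * multichoose (a - m) N) := by
  have hreflect : cpoch (a - m) m = (-1) ^ m * cpoch (1 - a) m := by
    have h := multichoose_one_sub_sub_natCast (1 - a) m
    rw [sub_sub_cancel] at h
    rw [cpoch_natCast, cpoch_natCast, h]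
    ring
  have hsign : ((-1 : ℂ) ^ m) * (-1) ^ m = 1 := pow_mul_pow_eq_one _ (by norm_num)
  rw [← cpoch_natCast, ← cpoch_sub_natCast_mul_cpoch ha, hreflect]
  linear_combination -(cpoch (1 - a) m * cpoch a (N - m)) * hsign

theorem cpoch_one_sub_mul_cpoch_div_cpoch {a c : ℂ} (ha : ∀ n : ℕ, a ≠ n + 1)
    (hc : ∀ n : ℤ, c ≠ n) (m N : ℕ) :
    cpoch (1 - a) m * cpoch a (N - m) / cpoch c (N - m) =
      cpoch (1 - c) m * (multichoose (a - m) N / multichoose (c - m) N) := by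
  have hcm := cpoch_one_sub_mul_cpoch (fun n => mod_cast hc (n + 1)) m N
  have hN : (N.factorial : ℂ) ≠ 0 := mod_cast N.factorial_ne_zero
  have hmulti := multichoose_sub_natCast_ne_zero hc m N
  have hcpoch : cpoch c (N - m) ≠ 0 :=
    right_ne_zero_of_mul (hcm.trans_ne (mul_ne_zero (by simp) (mul_ne_zero hN hmulti)))
  rw [cpoch_one_sub_mul_cpoch ha, ← mul_div_assoc, div_eq_div_iff hcpoch hmulti]
  linear_combination -multichoose (a - m) N * hcm

theorem ggrTerm_eq {α β γ : ℂ} (hc : ∀ n : ℤ, α + β ≠ n) (hγ : ∀ n : ℕ, γ ≠ n + 1)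
    (x y z : ℂ) (j k m : ℕ) :
    ggrTerm α β γ x y z (j, k, m) =
      multichoose α j * x ^ j * (multichoose β k * y ^ k) *
        (multichoose (1 - (α + β)) m * z ^ m *
          (multichoose (γ - m) (j + k) / multichoose (α + β - m) (j + k))) := by
  have hfact (n : ℕ) : (n.factorial : ℂ) ≠ 0 := mod_cast n.factorial_ne_zero
  have hratio := cpoch_one_sub_mul_cpoch_div_cpoch hγ hc m (j + k)
  rw [Nat.cast_add] at hratio
  calc ggrTerm α β γ x y z (j, k, m)
    _ = cpoch α j * cpoch β k / (j.factorial * k.factorial * m.factorial) *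
          (cpoch (1 - γ) m * cpoch γ (j + k - m) / cpoch (α + β) (j + k - m)) *
          x ^ j * y ^ k * z ^ m := by
        simp only [ggrTerm]
        ring
    _ = _ := by
        rw [hratio, cpoch_natCast, cpoch_natCast, cpoch_natCast]
        field_simp [hfact]

theorem exists_pos_le_norm_add_intCast {c : ℂ} (hc : ∀ n : ℤ, c ≠ n) :
    ∃ d : ℝ, 0 < d ∧ ∀ n : ℤ, d ≤ ‖c + n‖ := by
  have hmem : c ∈ (Set.range ((↑) : ℤ → ℂ))ᶜ := fun ⟨n, hn⟩ => hc n hn.symm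
  obtain ⟨d, hd, hball⟩ := Metric.isOpen_iff.1 Complex.isOpen_compl_range_intCast c hmem
  refine ⟨d, hd, fun n => not_lt.1 fun hlt => hball (a := ((-n : ℤ) : ℂ)) ?_ ⟨-n, rfl⟩⟩
  rw [Metric.mem_ball, dist_comm, dist_eq_norm]
  simpa using hlt

theorem exists_norm_multichoose_div_le {c : ℂ} (γ : ℂ) (hc : ∀ n : ℤ, c ≠ n) :
    ∃ K : ℝ, 1 ≤ K ∧ ∀ m N : ℕ,
      ‖multichoose (γ - m) N / multichoose (c - m) N‖ ≤ K ^ N := by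
  obtain ⟨d, hd, hdist⟩ := exists_pos_le_norm_add_intCast hc
  refine ⟨1 + ‖γ - c‖ / d, le_add_of_nonneg_right (by positivity), fun m N => ?_⟩
  induction N with
  | zero => simp
  | succ N ih =>
    have hle : d ≤ ‖c - m + N‖ := by
      simpa [sub_add_eq_add_sub, add_sub_assoc] using hdist (N - m)
    have hne : c - m + N ≠ 0 := norm_pos_iff.1 (hd.trans_le hle)
    have hfactor : (γ - m + N) / (c - m + N) = 1 + (γ - c) / (c - m + N) := by
      field_simp
      ring
    have hstep : multichoose (γ - m) (N + 1) / multichoose (c - m) (N + 1) =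
        multichoose (γ - m) N / multichoose (c - m) N * ((γ - m + N) / (c - m + N)) := by
      have hN : (N + 1 : ℂ) ≠ 0 := Nat.cast_add_one_ne_zero N
      rw [div_mul_div_comm, mul_comm (multichoose (γ - m) N), mul_comm (multichoose (c - m) N),
        ← succ_mul_multichoose_succ, ← succ_mul_multichoose_succ, mul_div_mul_left _ _ hN]
    rw [hstep, norm_mul, pow_succ, hfactor]
    gcongr
    refine (norm_add_le _ _).trans ?_
    rw [norm_one, norm_div]
    gcongr

theorem F21_eq_tsum_multichoose (a b c w : ℂ) :
    F21 a b c w =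
      ∑' n, multichoose a n * (multichoose b n / multichoose c n) * w ^ n := by
  refine tsum_congr fun n => ?_
  have hn : (n.factorial : ℂ) ≠ 0 := mod_cast n.factorial_ne_zero
  rw [cpoch_natCast, cpoch_natCast, cpoch_natCast]
  field_simp

end Pochhammer

section BinomialSeries

theorem hasSum_multichoose_mul_pow (a : ℂ) {w : ℂ} (hw : ‖w‖ < 1) :
    HasSum (fun n => multichoose a n * w ^ n) ((1 - w) ^ (-a)) := by
  have h := (Complex.one_div_one_sub_cpow_hasFPowerSeriesOnBall_zero a).hasSum
    (y := w) (by simpa [enorm_eq_nnnorm, ← NNReal.coe_lt_coe] using hw)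
  simpa only [FormalMultilinearSeries.ofScalars_apply_eq, zero_add, one_div, ← Complex.cpow_neg,
    ← Ring.multichoose_eq, smul_eq_mul] using h

theorem summable_norm_multichoose_mul_pow (a : ℂ) {r : ℝ} (hr : 0 ≤ r) (hr1 : r < 1) :
    Summable fun n => ‖multichoose a n‖ * r ^ n := by
  lift r to NNReal using hr
  have h := FormalMultilinearSeries.summable_norm_mul_pow (r := r) _ <|
    (ENNReal.coe_lt_one_iff.2 hr1).trans_le
      (Complex.one_div_one_sub_cpow_hasFPowerSeriesOnBall_zero a).r_le
  simpa only [FormalMultilinearSeries.ofScalars_norm, ← Ring.multichoose_eq] using h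

theorem one_sub_ne_zero_of_norm_lt_one {w : ℂ} (hw : ‖w‖ < 1) : 1 - w ≠ 0 :=
  sub_ne_zero.2 fun h => by simp [← h] at hw

theorem cpow_one_sub_mul_one_sub {v w : ℂ} (hv : ‖v‖ < 1) (hw : ‖w‖ < 1) (r : ℂ) :
    ((1 - v) * (1 - w)) ^ r = (1 - v) ^ r * (1 - w) ^ r := by
  have hv0 := one_sub_ne_zero_of_norm_lt_one hv
  have hw0 := one_sub_ne_zero_of_norm_lt_one hw
  have harg {u : ℂ} (hu : ‖u‖ < 1) : |(1 - u).arg| < Real.pi / 2 :=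
    Complex.abs_arg_lt_pi_div_two_iff.2 <| .inl <| by
      simpa using (Complex.re_le_norm u).trans_lt hu
  have hv' := abs_lt.1 (harg hv)
  have hw' := abs_lt.1 (harg hw)
  have hlog := Complex.log_mul hv0 hw0 ⟨by linarith, by linarith⟩
  rw [Complex.cpow_def_of_ne_zero (mul_ne_zero hv0 hw0), Complex.cpow_def_of_ne_zero hv0,
    Complex.cpow_def_of_ne_zero hw0, hlog, add_mul, Complex.exp_add]

theorem hasSum_choose_mul_multichoose_mul_pow (b : ℂ) (i : ℕ) {z : ℂ} (hz : ‖z‖ < 1) :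
    HasSum (fun m : ℕ => m.choose i * (multichoose b m * z ^ m))
      (multichoose b i * z ^ i * (1 - z) ^ (-(b + i))) := by
  have hvanish : ∀ m ∉ Set.range (· + i), (m.choose i * (multichoose b m * z ^ m) : ℂ) = 0 :=
    fun m hm => by
      rw [Nat.choose_eq_zero_of_lt (not_le.1 fun h => hm ⟨m - i, Nat.sub_add_cancel h⟩),
        Nat.cast_zero, zero_mul]
  rw [← (add_left_injective i).hasSum_iff hvanish]
  have hterm (n : ℕ) : ((n + i).choose i * (multichoose b (n + i) * z ^ (n + i)) : ℂ) =
      multichoose b i * z ^ i * (multichoose (b + i) n * z ^ n) := by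
    have h := choose_mul_multichoose_add_right b i n
    rw [add_comm n i]
    linear_combination z ^ (i + n) * h
  simp only [Function.comp_def, hterm]
  exact (hasSum_multichoose_mul_pow _ hz).mul_left _

/-- The binomial series for `(1 - f) ^ (-a)`, summed in an algebra over `ℂ`; it is the intended
element when `‖f‖ < 1` in a Banach algebra. -/
noncomputable def binomialSum {A : Type*} [NormedRing A] [NormedAlgebra ℂ A]
    (a : ℂ) (f : A) : A :=
  ∑' n, multichoose a n • f ^ n

section BanachAlgebra

variable {A : Type*} [NormedRing A] [NormOneClass A] [NormedAlgebra ℂ A]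

theorem summable_norm_multichoose_smul_pow (a : ℂ) {f : A} (hf : ‖f‖ < 1) :
    Summable fun n => ‖multichoose a n • f ^ n‖ :=
  (summable_norm_multichoose_mul_pow a (norm_nonneg f) hf).of_nonneg_of_le
    (fun _ => norm_nonneg _) fun n => by rw [norm_smul]; gcongr; exact norm_pow_le f n

theorem hasSum_binomialSum [CompleteSpace A] (a : ℂ) {f : A} (hf : ‖f‖ < 1) :
    HasSum (fun n => multichoose a n • f ^ n) (binomialSum a f) :=
  (summable_norm_multichoose_smul_pow a hf).of_norm.hasSum

theorem norm_binomialSum_one_le {f : A} (hf : ‖f‖ < 1) :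
    ‖binomialSum 1 f‖ ≤ (1 - ‖f‖)⁻¹ :=
  tsum_of_norm_bounded (hasSum_geometric_of_lt_one (norm_nonneg f) hf) fun n => by
    simpa using norm_pow_le f n

end BanachAlgebra

variable {X : Type*} [TopologicalSpace X] [CompactSpace X]

theorem one_sub_apply_ne_zero {f : C(X, ℂ)} (hf : ‖f‖ < 1) (p : X) : 1 - f p ≠ 0 :=
  one_sub_ne_zero_of_norm_lt_one ((f.norm_coe_le_norm p).trans_lt hf)

variable [Nonempty X]

theorem binomialSum_apply (a : ℂ) {f : C(X, ℂ)} (hf : ‖f‖ < 1) (p : X) :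
    binomialSum a f p = (1 - f p) ^ (-a) := by
  have h : HasSum (fun n => multichoose a n • f ^ n) (binomialSum a f) := hasSum_binomialSum a hf
  have hp : HasSum (fun n => multichoose a n * f p ^ n) (binomialSum a f p) := by
    simpa using ContinuousMap.hasSum_apply h p
  exact hp.unique (hasSum_multichoose_mul_pow a ((f.norm_coe_le_norm p).trans_lt hf))

theorem binomialSum_add (a b : ℂ) {f : C(X, ℂ)} (hf : ‖f‖ < 1) :
    binomialSum (a + b) f = binomialSum a f * binomialSum b f := by
  ext p
  rw [ContinuousMap.mul_apply, binomialSum_apply _ hf, binomialSum_apply _ hf,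
    binomialSum_apply _ hf, neg_add, Complex.cpow_add _ _ (one_sub_apply_ne_zero hf p)]

theorem binomialSum_natCast (n : ℕ) {f : C(X, ℂ)} (hf : ‖f‖ < 1) :
    binomialSum n f = binomialSum 1 f ^ n := by
  ext p
  rw [ContinuousMap.pow_apply, binomialSum_apply _ hf, binomialSum_apply _ hf, Complex.cpow_neg,
    Complex.cpow_natCast, Complex.cpow_neg_one, inv_pow]

theorem binomialSum_eq_mul {f g h : C(X, ℂ)} (hf : ‖f‖ < 1) (hg : ‖g‖ < 1) (hh : ‖h‖ < 1)
    (hfgh : 1 - f = (1 - g) * (1 - h)) (a : ℂ) :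
    binomialSum a f = binomialSum a g * binomialSum a h := by
  ext p
  have hp : 1 - f p = (1 - g p) * (1 - h p) := DFunLike.congr_fun hfgh p
  rw [ContinuousMap.mul_apply, binomialSum_apply _ hf, binomialSum_apply _ hg,
    binomialSum_apply _ hh, hp, cpow_one_sub_mul_one_sub
      ((g.norm_coe_le_norm p).trans_lt hg) ((h.norm_coe_le_norm p).trans_lt hh)]

theorem one_sub_mul_binomialSum_one {f : C(X, ℂ)} (hf : ‖f‖ < 1) :
    (1 - f) * binomialSum 1 f = 1 := by
  ext p
  rw [ContinuousMap.mul_apply, binomialSum_apply _ hf, Complex.cpow_neg_one]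
  exact mul_inv_cancel₀ (one_sub_apply_ne_zero hf p)

theorem binomialSum_algebraMap (a : ℂ) {w : ℂ} (hw : ‖w‖ < 1) :
    binomialSum a (algebraMap ℂ C(X, ℂ) w) = algebraMap ℂ C(X, ℂ) ((1 - w) ^ (-a)) := by
  ext p
  exact binomialSum_apply a (by simpa using hw) p

theorem binomialSum_smul_add_algebraMap (a : ℂ) {x z s : ℂ} {t : C(X, ℂ)} (hxz : ‖x * z‖ < 1)
    (hst : ‖x • (s • t + algebraMap ℂ C(X, ℂ) z)‖ < 1) (ht : ‖(x * s / (1 - x * z)) • t‖ < 1) :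
    binomialSum a (x • (s • t + algebraMap ℂ C(X, ℂ) z)) =
      (1 - x * z) ^ (-a) • binomialSum a ((x * s / (1 - x * z)) • t) := by
  have hxz0 := one_sub_ne_zero_of_norm_lt_one hxz
  have hfactor : 1 - x • (s • t + algebraMap ℂ C(X, ℂ) z) =
      (1 - algebraMap ℂ C(X, ℂ) (x * z)) * (1 - (x * s / (1 - x * z)) • t) := by
    ext p
    simp only [ContinuousMap.sub_apply, ContinuousMap.mul_apply, ContinuousMap.smul_apply,
      ContinuousMap.add_apply, ContinuousMap.one_apply, algebraMap_apply,
      smul_eq_mul, mul_one]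
    field_simp
    ring
  rw [binomialSum_eq_mul hst ((norm_algebraMap' C(X, ℂ) _).trans_lt hxz) ht hfactor,
    binomialSum_algebraMap a hxz, Algebra.smul_def ((1 - x * z) ^ (-a))]

theorem hasSum_binomialSum_mul_binomialSum_add (a b : ℂ) {f h : C(X, ℂ)} (hfh : ‖f‖ + ‖h‖ < 1) :
    HasSum (fun k : ℕ => multichoose b k • (h ^ k * binomialSum (a + b + k) f))
      (binomialSum a f * binomialSum b (f + h)) := by
  have hf : ‖f‖ < 1 := by linarith [norm_nonneg h]
  set v := h * binomialSum 1 f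
  have hv1 : ‖v‖ < 1 := by
    calc ‖v‖ ≤ ‖h‖ * (1 - ‖f‖)⁻¹ :=
          (norm_mul_le _ _).trans (by gcongr; exact norm_binomialSum_one_le hf)
      _ < 1 := by rw [← div_eq_mul_inv, div_lt_one (by linarith)]; linarith
  -- `(1 - f - h) ^ (-b) = (1 - f) ^ (-b) * (1 - v) ^ (-b)`, to be expanded in powers of `v`
  have hfactor : 1 - (f + h) = (1 - f) * (1 - v) := by
    linear_combination h * one_sub_mul_binomialSum_one hf
  have hterm (k : ℕ) : multichoose b k • (h ^ k * binomialSum (a + b + k) f) =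
      binomialSum (a + b) f * multichoose b k • v ^ k := by
    rw [binomialSum_add _ _ hf, binomialSum_natCast k hf, mul_pow, mul_smul_comm]
    congr 1
    ring
  rw [binomialSum_eq_mul ((norm_add_le _ _).trans_lt hfh) hf hv1 hfactor, ← mul_assoc,
    ← binomialSum_add _ _ hf]
  simp only [hterm]
  exact (hasSum_binomialSum b hv1).mul_left _

end BinomialSeries

section BetaMoments

section FourierCoefficients

variable {T : ℝ} [Fact (0 < T)]

/-- The `n`-th Fourier coefficient as a continuous linear functional for the supremum norm. -/
noncomputable def fourierCoeffCLM (n : ℤ) : C(AddCircle T, ℂ) →L[ℂ] ℂ :=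
  innerSL ℂ (fourierLp 2 n) ∘L ContinuousMap.toLp 2 AddCircle.haarAddCircle ℂ

theorem fourierCoeffCLM_fourier (n k : ℤ) :
    fourierCoeffCLM n (fourier k : C(AddCircle T, ℂ)) = if n = k then 1 else 0 :=
  orthonormal_iff_ite.1 orthonormal_fourier n k

theorem norm_fourierCoeffCLM_le (n : ℤ) :
    ‖fourierCoeffCLM (T := T) n‖ ≤
      ‖ContinuousMap.toLp (E := ℂ) 2 (AddCircle.haarAddCircle (T := T)) ℂ‖ := by
  refine (ContinuousLinearMap.opNorm_comp_le (innerSL ℂ (fourierLp 2 n)) _).trans_eq ?_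
  rw [innerSL_apply_norm, orthonormal_fourier.norm_eq_one, one_mul]

theorem exists_continuousLinearMap_fourier_eq {g : ℕ → ℂ} (hg : Summable fun n => ‖g n‖) :
    ∃ E : C(AddCircle T, ℂ) →L[ℂ] ℂ, ∀ n : ℕ, E (fourier n) = g n := by
  have hsum : Summable fun n : ℕ => g n • fourierCoeffCLM (T := T) n :=
    (hg.mul_right _).of_norm_bounded fun n => by
      rw [norm_smul]
      gcongr
      exact norm_fourierCoeffCLM_le n
  refine ⟨∑' n : ℕ, g n • fourierCoeffCLM n, fun k => ?_⟩
  have hk := hsum.hasSum.mapL (ContinuousLinearMap.apply ℂ ℂ (fourier k))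
  simpa [fourierCoeffCLM_fourier] using hk.tsum_eq.symm

end FourierCoefficients

theorem fourier_natCast {T : ℝ} (n : ℕ) : (fourier n : C(AddCircle T, ℂ)) = fourier 1 ^ n := by
  ext p
  simp [fourier_apply, AddCircle.toCircle_nsmul]

/-- The functional `E` has the moments `(γ)ₙ / (c)ₙ` of the Beta distribution with parameters
`γ` and `c - γ`, the function `t` playing the role of the variable. No measure is involved, so that
complex `γ` and `c` are allowed. -/
def HasBetaMoments {X : Type*} [TopologicalSpace X] (E : C(X, ℂ) →L[ℂ] ℂ) (t : C(X, ℂ))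
    (γ c : ℂ) : Prop :=
  ∀ n : ℕ, E (t ^ n) = multichoose γ n / multichoose c n

theorem exists_hasBetaMoments {γ c : ℂ} {K : ℝ} (hK : 0 < K)
    (hbound : ∀ n : ℕ, ‖multichoose γ n / multichoose c n‖ ≤ K ^ n) :
    ∃ (E : C(UnitAddCircle, ℂ) →L[ℂ] ℂ) (t : C(UnitAddCircle, ℂ)),
      ‖t‖ = 2 * K ∧ HasBetaMoments E t γ c := by
  have hR : (2 * K : ℂ) ≠ 0 := by simpa using hK.ne'
  have hsum : Summable fun n => ‖multichoose γ n / multichoose c n / (2 * K) ^ n‖ := by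
    refine summable_geometric_two.of_nonneg_of_le (fun _ => norm_nonneg _) fun n => ?_
    rw [norm_div, norm_pow, norm_mul, Complex.norm_ofNat, Complex.norm_of_nonneg hK.le,
      div_le_iff₀ (by positivity), ← mul_pow]
    exact (hbound n).trans_eq (by ring)
  obtain ⟨E, hE⟩ := exists_continuousLinearMap_fourier_eq (T := 1) hsum
  refine ⟨E, (2 * K : ℂ) • fourier 1, ?_, fun n => ?_⟩
  · rw [norm_smul, fourier_norm, norm_mul, Complex.norm_ofNat, Complex.norm_of_nonneg hK.le,
      mul_one]
  · rw [smul_pow, ← fourier_natCast, map_smul, hE, smul_eq_mul,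
      mul_div_cancel₀ _ (pow_ne_zero n hR)]

namespace HasBetaMoments

variable {X : Type*} [TopologicalSpace X] {E : C(X, ℂ) →L[ℂ] ℂ} {t : C(X, ℂ)} {γ c : ℂ}

theorem map_smul_add_algebraMap_pow (hE : HasBetaMoments E t γ c) (s z : ℂ) (N : ℕ) :
    E ((s • t + algebraMap ℂ C(X, ℂ) z) ^ N) = ∑ p ∈ antidiagonal N,
      N.choose p.1 * s ^ p.1 * z ^ p.2 * (multichoose γ p.1 / multichoose c p.1) := by
  rw [(Commute.all _ _).add_pow', map_sum]
  refine sum_congr rfl fun p _ => ?_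
  rw [map_nsmul, nsmul_eq_mul, smul_pow, ← map_pow, mul_comm (s ^ _ • _), ← Algebra.smul_def,
    map_smul, map_smul, hE, smul_eq_mul, smul_eq_mul]
  ring

theorem hasSum_multichoose_sub_div (hE : HasBetaMoments E t γ c) (hc : ∀ n : ℤ, c ≠ n) {z : ℂ}
    (hz : ‖z‖ < 1) (N : ℕ) :
    HasSum (fun m : ℕ => multichoose (1 - c) m * z ^ m *
        (multichoose (γ - m) N / multichoose (c - m) N))
      ((1 - z) ^ (c - 1) * E (((1 - z) • t + algebraMap ℂ C(X, ℂ) z) ^ N)) := by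
  have hz0 := one_sub_ne_zero_of_norm_lt_one hz
  have hterm (m : ℕ) :
      multichoose (1 - c) m * z ^ m * (multichoose (γ - m) N / multichoose (c - m) N) =
        ∑ p ∈ antidiagonal N, multichoose γ p.1 * (-1) ^ p.2 / multichoose c N *
          (m.choose p.2 * (multichoose (1 - c - N) m * z ^ m)) := by
    rw [mul_right_comm, multichoose_one_sub_mul_div_eq_sum hc, sum_mul]
    exact sum_congr rfl fun p _ => by ring
  have hval : (1 - z) ^ (c - 1) * E (((1 - z) • t + algebraMap ℂ C(X, ℂ) z) ^ N) =
      ∑ p ∈ antidiagonal N, multichoose γ p.1 * (-1) ^ p.2 / multichoose c N *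
        (multichoose (1 - c - N) p.2 * z ^ p.2 * (1 - z) ^ (-(1 - c - N + p.2))) := by
    rw [hE.map_smul_add_algebraMap_pow, mul_sum]
    refine sum_congr rfl fun p hp => ?_
    obtain ⟨l, i⟩ := p
    obtain rfl := mem_antidiagonal.1 hp
    have hreflect := multichoose_one_sub_sub_natCast (c + l) i
    have hratio := multichoose_add_natCast_div hc l i
    have hexp : -(1 - c - (l + i : ℕ) + i) = c - 1 + l := by push_cast; ring
    have hbase : 1 - c - (l + i : ℕ) = 1 - (c + l) - i := by push_cast; ring
    rw [hexp, hbase, hreflect, Complex.cpow_add _ _ hz0, Complex.cpow_natCast]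
    have hsign : ((-1 : ℂ) ^ i) * (-1) ^ i = 1 := pow_mul_pow_eq_one _ (by norm_num)
    linear_combination -(multichoose γ l * z ^ i * (1 - z) ^ (c - 1) * (1 - z) ^ l) *
      (hratio + multichoose (c + l) i / multichoose c (l + i) * hsign)
  simp only [hterm, hval]
  exact hasSum_sum fun p _ => (hasSum_choose_mul_multichoose_mul_pow _ _ hz).mul_left _

variable [CompactSpace X] [Nonempty X]

theorem map_pow_mul_binomialSum (hE : HasBetaMoments E t γ c) (hc : ∀ n : ℤ, c ≠ n) {a : ℂ}
    (ha : ‖a‖ < 1) (hat : ‖a • t‖ < 1) (k : ℕ) :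
    E (t ^ k * binomialSum (c + k) (a • t)) =
      multichoose γ k / multichoose c k * (1 - a) ^ (-(γ + k)) := by
  have hterm (n : ℕ) : E (t ^ k * multichoose (c + k) n • (a • t) ^ n) =
      multichoose γ k / multichoose c k * (multichoose (γ + k) n * a ^ n) := by
    have hγn := choose_mul_multichoose_add_right γ k n
    have hcn := choose_mul_multichoose_add_right c k n
    have hk := multichoose_ne_zero hc k
    have hkn := multichoose_ne_zero hc (k + n)
    rw [smul_pow, mul_smul_comm, mul_smul_comm, ← pow_add, map_smul, map_smul, hE,
      smul_eq_mul, smul_eq_mul]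
    field_simp
    linear_combination a ^ n * (multichoose c (k + n) * hγn - multichoose γ (k + n) * hcn)
  have hsum := ((hasSum_binomialSum (c + k) hat).mul_left (t ^ k)).mapL E
  simp only [hterm] at hsum
  exact hsum.unique ((hasSum_multichoose_mul_pow _ ha).mul_left _)

theorem map_binomialSum_mul_binomialSum {α β : ℂ} (hE : HasBetaMoments E t γ (α + β))
    (hc : ∀ n : ℤ, α + β ≠ n) {a b : ℂ} (ha : ‖a‖ < 1) (hab : ‖a • t‖ + ‖(b - a) • t‖ < 1) :
    E (binomialSum α (a • t) * binomialSum β (b • t)) =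
      (1 - a) ^ (-γ) * F21 β γ (α + β) ((b - a) / (1 - a)) := by
  have hat : ‖a • t‖ < 1 := by linarith [norm_nonneg ((b - a) • t)]
  have hterm (k : ℕ) :
      E (multichoose β k • (((b - a) • t) ^ k * binomialSum (α + β + k) (a • t))) =
        (1 - a) ^ (-γ) * (multichoose β k * (multichoose γ k / multichoose (α + β) k) *
          ((b - a) / (1 - a)) ^ k) := by
    rw [smul_pow, smul_mul_assoc, map_smul, map_smul, hE.map_pow_mul_binomialSum hc ha hat,
      neg_add, Complex.cpow_add _ _ (one_sub_ne_zero_of_norm_lt_one ha), Complex.cpow_neg _ (k : ℂ),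
      Complex.cpow_natCast, div_pow, smul_eq_mul, smul_eq_mul]
    ring
  have hsum := (hasSum_binomialSum_mul_binomialSum_add α β hab).mapL E
  rw [← add_smul, add_sub_cancel] at hsum
  simp only [hterm] at hsum
  rw [F21_eq_tsum_multichoose, ← tsum_mul_left]
  exact hsum.tsum_eq.symm

end HasBetaMoments

end BetaMoments

section Reduction

theorem one_sub_mul_mul_one_sub_div {x z : ℂ} (hxz : 1 - x * z ≠ 0) :
    (1 - x * z) * (1 - x * (1 - z) / (1 - x * z)) = 1 - x := by
  field_simp
  ring

theorem mul_one_sub_div_sub_div {x y z : ℂ} (hx : 1 - x ≠ 0) (hxz : 1 - x * z ≠ 0)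
    (hyz : 1 - y * z ≠ 0) :
    (y * (1 - z) / (1 - y * z) - x * (1 - z) / (1 - x * z)) / (1 - x * (1 - z) / (1 - x * z)) =
      (y - x) * (1 - z) / ((1 - x) * (1 - y * z)) := by
  have hsub : y * (1 - z) / (1 - y * z) - x * (1 - z) / (1 - x * z) =
      (y - x) * (1 - z) / ((1 - x * z) * (1 - y * z)) := by
    rw [div_sub_div _ _ hyz hxz, mul_comm (1 - y * z)]
    ring
  rw [hsub, ← mul_div_mul_left _ _ hxz, one_sub_mul_mul_one_sub_div hxz]
  field_simp

theorem norm_mul_one_sub_div_le {x z : ℂ} (hx : ‖x‖ ≤ 1) (hz : ‖z‖ ≤ 1 / 2) :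
    ‖x * (1 - z) / (1 - x * z)‖ ≤ 3 * ‖x‖ := by
  have hxz : ‖x * z‖ ≤ 1 / 2 := by
    rw [norm_mul]
    nlinarith [norm_nonneg z]
  have hnum : ‖1 - z‖ ≤ 3 / 2 := by linarith [norm_sub_le 1 z, norm_one (α := ℂ)]
  have hden : 1 / 2 ≤ ‖1 - x * z‖ := by linarith [norm_sub_norm_le 1 (x * z), norm_one (α := ℂ)]
  rw [norm_div, norm_mul, div_le_iff₀ (by linarith)]
  nlinarith [norm_nonneg x]

variable {X : Type*} [TopologicalSpace X] [CompactSpace X] [Nonempty X]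
  {E : C(X, ℂ) →L[ℂ] ℂ} {t : C(X, ℂ)} {α β γ x y z : ℂ}

theorem norm_smul_smul_add_algebraMap_lt_one (ht : 1 ≤ ‖t‖) (hx : 9 * ‖x‖ * ‖t‖ < 1)
    (hz : ‖z‖ ≤ 1 / 2) : ‖x • ((1 - z) • t + algebraMap ℂ C(X, ℂ) z)‖ < 1 := by
  have hnum : ‖1 - z‖ ≤ 3 / 2 := by linarith [norm_sub_le 1 z, norm_one (α := ℂ)]
  calc ‖x • ((1 - z) • t + algebraMap ℂ C(X, ℂ) z)‖
    _ ≤ ‖x‖ * (‖1 - z‖ * ‖t‖ + ‖z‖) := by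
      rw [norm_smul]
      gcongr
      exact (norm_add_le _ _).trans_eq (by rw [norm_smul, norm_algebraMap'])
    _ ≤ ‖x‖ * (3 / 2 * ‖t‖ + 1 / 2 * ‖t‖) := by
      gcongr
      linarith
    _ < 1 := by nlinarith [norm_nonneg x, norm_nonneg t]

theorem HasBetaMoments.map_binomialSum_mul_binomialSum_smul_add
    (hE : HasBetaMoments E t γ (α + β)) (hc : ∀ n : ℤ, α + β ≠ n) (ht : 1 ≤ ‖t‖)
    (hx : 9 * ‖x‖ * ‖t‖ < 1) (hy : 9 * ‖y‖ * ‖t‖ < 1) (hz : ‖z‖ ≤ 1 / 2) :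
    E (binomialSum α (x • ((1 - z) • t + algebraMap ℂ C(X, ℂ) z)) *
        binomialSum β (y • ((1 - z) • t + algebraMap ℂ C(X, ℂ) z))) =
      (1 - x * z) ^ (γ - α) * (1 - x) ^ (-γ) * (1 - y * z) ^ (-β) *
        F21 β γ (α + β) ((y - x) * (1 - z) / ((1 - x) * (1 - y * z))) := by
  have hx1 : ‖x‖ < 1 := by nlinarith [norm_nonneg x]
  have hy1 : ‖y‖ < 1 := by nlinarith [norm_nonneg y]
  have hxz : ‖x * z‖ < 1 := by rw [norm_mul]; nlinarith [norm_nonneg x]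
  have hyz : ‖y * z‖ < 1 := by rw [norm_mul]; nlinarith [norm_nonneg y]
  have hxz0 := one_sub_ne_zero_of_norm_lt_one hxz
  set a := x * (1 - z) / (1 - x * z)
  set b := y * (1 - z) / (1 - y * z)
  have ha : ‖a‖ ≤ 3 * ‖x‖ := norm_mul_one_sub_div_le hx1.le hz
  have hb : ‖b‖ ≤ 3 * ‖y‖ := norm_mul_one_sub_div_le hy1.le hz
  have ha1 : ‖a‖ < 1 := by nlinarith [norm_nonneg x]
  have hat : ‖a • t‖ < 1 := by rw [norm_smul]; nlinarith
  have hbt : ‖b • t‖ < 1 := by rw [norm_smul]; nlinarith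
  have hab : ‖a • t‖ + ‖(b - a) • t‖ < 1 := by
    rw [norm_smul, norm_smul]
    nlinarith [norm_sub_le b a]
  have hpow : (1 - x * z) ^ (γ - α) * (1 - x) ^ (-γ) = (1 - x * z) ^ (-α) * (1 - a) ^ (-γ) := by
    rw [← one_sub_mul_mul_one_sub_div hxz0, cpow_one_sub_mul_one_sub hxz ha1, ← mul_assoc,
      ← Complex.cpow_add _ _ hxz0]
    ring_nf
  rw [binomialSum_smul_add_algebraMap α hxz (norm_smul_smul_add_algebraMap_lt_one ht hx hz) hat,
    binomialSum_smul_add_algebraMap β hyz (norm_smul_smul_add_algebraMap_lt_one ht hy hz) hbt,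
    smul_mul_smul_comm, map_smul, hE.map_binomialSum_mul_binomialSum hc ha1 hab, hpow,
    mul_one_sub_div_sub_div (one_sub_ne_zero_of_norm_lt_one hx1) hxz0
      (one_sub_ne_zero_of_norm_lt_one hyz), smul_eq_mul]
  ring

end Reduction

section TripleSeries

theorem hasSum_prod_map_pow_add {A : Type*} [NormedRing A] [NormOneClass A] [NormedAlgebra ℂ A]
    [CompleteSpace A] (E : A →L[ℂ] ℂ) (α β : ℂ) {x y : ℂ} {u : A} (hx : ‖x • u‖ < 1)
    (hy : ‖y • u‖ < 1) :
    HasSum (fun q : ℕ × ℕ => multichoose α q.1 * x ^ q.1 * (multichoose β q.2 * y ^ q.2) *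
        E (u ^ (q.1 + q.2)))
      (E (binomialSum α (x • u) * binomialSum β (y • u))) := by
  have hprod := summable_mul_of_summable_norm (summable_norm_multichoose_smul_pow α hx)
    (summable_norm_multichoose_smul_pow β hy)
  have hsum := ((hasSum_binomialSum α hx).mul (hasSum_binomialSum β hy) hprod).mapL E
  simpa only [smul_pow, smul_smul, smul_mul_smul_comm, ← pow_add, map_smul, smul_eq_mul] using hsum

theorem summable_norm_ggrTerm {α β γ x y z : ℂ} (hc : ∀ n : ℤ, α + β ≠ n)
    (hγ : ∀ n : ℕ, γ ≠ n + 1) {K : ℝ} (hK : 0 ≤ K)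
    (hbound : ∀ m N : ℕ, ‖multichoose (γ - m) N / multichoose (α + β - m) N‖ ≤ K ^ N)
    (hx : K * ‖x‖ < 1) (hy : K * ‖y‖ < 1) (hz : ‖z‖ < 1) :
    Summable fun p => ‖ggrTerm α β γ x y z p‖ := by
  have hdom := (summable_norm_multichoose_mul_pow α (by positivity) hx).mul_of_nonneg
    ((summable_norm_multichoose_mul_pow β (by positivity) hy).mul_of_nonneg
      (summable_norm_multichoose_mul_pow (1 - (α + β)) (norm_nonneg z) hz)
      (fun _ => by positivity) fun _ => by positivity)
    (fun _ => by positivity) fun _ => by positivity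
  refine hdom.of_nonneg_of_le (fun _ => norm_nonneg _) fun ⟨j, k, m⟩ => ?_
  rw [ggrTerm_eq hc hγ]
  simp only [norm_mul, norm_pow]
  calc
    _ ≤ ‖multichoose α j‖ * ‖x‖ ^ j * (‖multichoose β k‖ * ‖y‖ ^ k) *
          (‖multichoose (1 - (α + β)) m‖ * ‖z‖ ^ m * K ^ (j + k)) := by
      gcongr
      exact hbound m (j + k)
    _ = _ := by
      rw [pow_add, mul_pow, mul_pow]
      ring

theorem HasBetaMoments.tsum_ggrTerm {X : Type*} [TopologicalSpace X] [CompactSpace X] [Nonempty X]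
    {E : C(X, ℂ) →L[ℂ] ℂ} {t : C(X, ℂ)} {α β γ x y z : ℂ} (hE : HasBetaMoments E t γ (α + β))
    (hc : ∀ n : ℤ, α + β ≠ n) (hγ : ∀ n : ℕ, γ ≠ n + 1) (hz : ‖z‖ < 1)
    (hx : ‖x • ((1 - z) • t + algebraMap ℂ C(X, ℂ) z)‖ < 1)
    (hy : ‖y • ((1 - z) • t + algebraMap ℂ C(X, ℂ) z)‖ < 1)
    (hsum : Summable (ggrTerm α β γ x y z)) :
    ∑' p, ggrTerm α β γ x y z p = (1 - z) ^ (α + β - 1) *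
      E (binomialSum α (x • ((1 - z) • t + algebraMap ℂ C(X, ℂ) z)) *
        binomialSum β (y • ((1 - z) • t + algebraMap ℂ C(X, ℂ) z))) := by
  have hinner (q : ℕ × ℕ) : ∑' m, ggrTerm α β γ x y z (q.1, q.2, m) =
      (1 - z) ^ (α + β - 1) * (multichoose α q.1 * x ^ q.1 * (multichoose β q.2 * y ^ q.2) *
        E (((1 - z) • t + algebraMap ℂ C(X, ℂ) z) ^ (q.1 + q.2))) := by
    simp only [ggrTerm_eq hc hγ]
    rw [tsum_mul_left, (hE.hasSum_multichoose_sub_div hc hz _).tsum_eq]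
    ring
  calc ∑' p, ggrTerm α β γ x y z p
    _ = ∑' q : (ℕ × ℕ) × ℕ, ggrTerm α β γ x y z (q.1.1, q.1.2, q.2) :=
      ((Equiv.prodAssoc ℕ ℕ ℕ).tsum_eq _).symm
    _ = ∑' q : ℕ × ℕ, ∑' m, ggrTerm α β γ x y z (q.1, q.2, m) :=
      ((Equiv.prodAssoc ℕ ℕ ℕ).summable_iff.2 hsum).tsum_prod
    _ = _ := by
      simp only [hinner]
      rw [tsum_mul_left, (hasSum_prod_map_pow_add E α β hx hy).tsum_eq]

end TripleSeries

theorem ggr_triple_sum_eq_second_form_general (α β γ : ℂ)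
    (hαβ : ∀ n : ℤ, α + β ≠ (n : ℂ)) (hγ : ∀ n : ℕ, γ ≠ (n : ℂ) + 1) :
    ∃ ε : ℝ, 0 < ε ∧ ∀ x y z : ℂ, ‖x‖ < ε → ‖y‖ < ε → ‖z‖ < ε →
      Summable (fun p : ℕ × ℕ × ℕ => ‖ggrTerm α β γ x y z p‖) ∧
      (∑' p : ℕ × ℕ × ℕ, ggrTerm α β γ x y z p) =
        (1 - z) ^ (α + β - 1) * (1 - x * z) ^ (γ - α) * (1 - x) ^ (-γ) *
          (1 - y * z) ^ (-β) *
          F21 β γ (α + β) ((y - x) * (1 - z) / ((1 - x) * (1 - y * z))) := by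
  obtain ⟨K, hK, hbound⟩ := exists_norm_multichoose_div_le γ hαβ
  obtain ⟨E, t, htK, hE⟩ :=
    exists_hasBetaMoments (one_pos.trans_le hK) fun n => by simpa using hbound 0 n
  have ht : 1 ≤ ‖t‖ := by linarith
  refine ⟨(9 * ‖t‖)⁻¹, by positivity, fun x y z hx hy hz => ?_⟩
  have hsmall {w : ℂ} (hw : ‖w‖ < (9 * ‖t‖)⁻¹) : 9 * ‖w‖ * ‖t‖ < 1 := by
    rw [inv_eq_one_div, lt_div_iff₀ (by positivity)] at hw
    linarith
  have hKw {w : ℂ} (hw : ‖w‖ < (9 * ‖t‖)⁻¹) : K * ‖w‖ < 1 := by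
    nlinarith [hsmall hw, norm_nonneg w]
  have hz2 : ‖z‖ ≤ 1 / 2 := by nlinarith [hsmall hz, norm_nonneg z]
  have hsum := summable_norm_ggrTerm hαβ hγ (zero_le_one.trans hK) hbound (hKw hx) (hKw hy)
    (hz2.trans_lt one_half_lt_one)
  refine ⟨hsum, ?_⟩
  rw [hE.tsum_ggrTerm hαβ hγ (hz2.trans_lt one_half_lt_one)
      (norm_smul_smul_add_algebraMap_lt_one ht (hsmall hx) hz2)
      (norm_smul_smul_add_algebraMap_lt_one ht (hsmall hy) hz2) hsum.of_norm,
    hE.map_binomialSum_mul_binomialSum_smul_add hαβ ht (hsmall hx) (hsmall hy) hz2]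
  ring

theorem ggr_triple_sum_eq_second_form (α β γ : ℂ)
    (hαβ : ∀ n : ℤ, α + β ≠ (n : ℂ)) (hγ : ∀ n : ℤ, γ ≠ (n : ℂ)) :
    ∃ ε : ℝ, 0 < ε ∧ ∀ x y z : ℂ, ‖x‖ < ε → ‖y‖ < ε → ‖z‖ < ε →
      Summable (fun p : ℕ × ℕ × ℕ => ‖ggrTerm α β γ x y z p‖) ∧
      (∑' p : ℕ × ℕ × ℕ, ggrTerm α β γ x y z p) =
        (1 - z) ^ (α + β - 1) * (1 - x * z) ^ (γ - α) * (1 - x) ^ (-γ) *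
          (1 - y * z) ^ (-β) *
          F21 β γ (α + β) ((y - x) * (1 - z) / ((1 - x) * (1 - y * z))) :=
  ggr_triple_sum_eq_second_form_general α β γ hαβ fun n => mod_cast hγ (n + 1)
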